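/- arXiv:1609.04943 — 4 statements merged into one kernel-verified Lean document; each statement's English description precedes it below -/
import Mathlib

section
/- Let (Ω,Σ,μ) be a probability space and φ : Ω → Ω a bimeasurable measure-preserving transformation with Perron–Frobenius operator P on L¹(Ω,Σ,μ). Then the following are equivalent: (i) for every A ∈ Σ there exists a measurable set L such that μ(φⁿ(A) Δ L) → 0 as n → ∞; (ii) for every f ∈ L¹(Ω,Σ,μ) the sequence (Pⁿf) converges in the L¹-norm; (iii) every set B ∈ Σ_∞ satisfies μ(B Δ φ⁻¹(B)) = 0. -/
open MeasureTheory Filter Set Topology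
open scoped symmDiff ENNReal

/-!
The Koopman isometry `U f = f ∘ φ` inverts `P` up to conditioning: `Uⁿ Pⁿ f = E[f | φ⁻ⁿ Σ]`. By
Lévy's downward theorem `E[f | φ⁻ⁿ Σ] → E[f | Σ_∞]` in `L¹`. If `U` fixes every `Σ_∞`-measurable
function, applying the isometry `Uⁿ` gives `‖Pⁿ f - E[f | Σ_∞]‖ = ‖E[f | φ⁻ⁿ Σ] - E[f | Σ_∞]‖ → 0`.
Conversely, a `Σ_∞`-measurable `f` satisfies `Uⁿ Pⁿ f = f`, hence `‖U f - f‖ = ‖Pⁿ f - Pⁿ⁺¹ f‖` for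
all `n`, and convergence of `Pⁿ f` forces `U f = f`.

For images of sets, `D n = φ⁻ⁿ(φⁿ(A))` increases to a set `L ∈ Σ_∞`, and when `L` is `φ`-invariant
`μ(φⁿ(A) ∆ L) = μ(L \ D n) → 0`. Conversely, `B ∈ Σ_∞` gives `φ⁻ⁿ(φⁿ(B)) = B`, hence
`μ(φⁿ⁺¹(B) ∆ φⁿ(B)) = μ(B ∆ φ⁻¹(B))` for all `n`.
-/

section DecreasingSubspaces

variable {𝕜 H ι : Type*} [RCLike 𝕜] [NormedAddCommGroup H] [InnerProductSpace 𝕜 H]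
  [CompleteSpace H]

theorem topologicalClosure_iSup_orthogonal (U : ι → Submodule 𝕜 H)
    [∀ i, (U i).HasOrthogonalProjection] :
    (⨆ i, (U i)ᗮ).topologicalClosure = (⨅ i, U i)ᗮ := by
  rw [← Submodule.orthogonal_orthogonal_eq_closure, ← Submodule.iInf_orthogonal]
  simp only [Submodule.orthogonal_orthogonal]

theorem tendsto_starProjection_iInf [Preorder ι] (U : ι → Submodule 𝕜 H)
    [∀ i, (U i).HasOrthogonalProjection] [(⨅ i, U i).HasOrthogonalProjection]
    (hU : Antitone U) (x : H) :
    Tendsto (fun i ↦ (U i).starProjection x) atTop (𝓝 ((⨅ i, U i).starProjection x)) := by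
  have hmono : Monotone fun i ↦ (U i)ᗮ := fun i j hij ↦ Submodule.orthogonal_le (hU hij)
  have hlim := Submodule.starProjection_tendsto_closure_iSup (fun i ↦ (U i)ᗮ) hmono x
  simp only [topologicalClosure_iSup_orthogonal, Submodule.starProjection_orthogonal'] at hlim
  simpa using hlim.const_sub x

end DecreasingSubspaces

section DownwardTheorem

variable {Ω : Type*} {m : MeasurableSpace Ω} {μ : Measure Ω} {ℱ : ℕ → MeasurableSpace Ω}

theorem aestronglyMeasurable_iInf_of_antitone {β : Type*} [ConditionallyCompleteLinearOrder β]
    [TopologicalSpace β] [OrderTopology β] [SecondCountableTopology β] (hℱ : Antitone ℱ)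
    {f : Ω → β} (hf : ∀ n, AEStronglyMeasurable[ℱ n] f μ) :
    AEStronglyMeasurable[⨅ n, ℱ n] f μ := by
  borelize β
  choose g hg hfg using hf
  -- The limsup depends only on a tail of `g`, so it is measurable for every `ℱ k`.
  let h : Ω → β := fun x ↦ limsup (fun n ↦ g n x) atTop
  have h_meas (k : ℕ) : Measurable[ℱ k] h := by
    have h_shift : h = fun x ↦ limsup (fun n ↦ g (n + k) x) atTop :=
      funext fun x ↦ (limsup_nat_add (fun n ↦ g n x) k).symm
    rw [h_shift]
    exact Measurable.limsup (mδ := ℱ k) fun n ↦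
      (hg (n + k)).measurable.mono (hℱ (Nat.le_add_left k n)) le_rfl
  have h_meas_iInf : Measurable[⨅ n, ℱ n] h := fun s hs ↦
    MeasurableSpace.measurableSet_iInf.2 fun k ↦ h_meas k hs
  refine ⟨h, h_meas_iInf.stronglyMeasurable, ?_⟩
  filter_upwards [ae_all_iff.2 hfg] with x hx
  simp only [h, ← hx, limsup_const]

theorem iInf_lpMeas (hℱ : Antitone ℱ) (p : ℝ≥0∞) :
    ⨅ n, lpMeas ℝ ℝ (ℱ n) p μ = lpMeas ℝ ℝ (⨅ n, ℱ n) p μ := by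
  ext f
  simp only [Submodule.mem_iInf, mem_lpMeas_iff_aestronglyMeasurable]
  exact ⟨aestronglyMeasurable_iInf_of_antitone hℱ, fun hf n ↦ hf.mono (iInf_le ℱ n)⟩

theorem tendsto_condExpL2_iInf (hℱ : Antitone ℱ) (hle : ∀ n, ℱ n ≤ m) (f : Lp ℝ 2 μ) :
    Tendsto (fun n ↦ (condExpL2 ℝ ℝ (hle n) f : Lp ℝ 2 μ)) atTop
      (𝓝 (condExpL2 ℝ ℝ (iInf_le_of_le 0 (hle 0)) f : Lp ℝ 2 μ)) := by
  have (n : ℕ) : Fact (ℱ n ≤ m) := ⟨hle n⟩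
  have : Fact (⨅ n, ℱ n ≤ m) := ⟨iInf_le_of_le 0 (hle 0)⟩
  have : (⨅ n, lpMeas ℝ ℝ (ℱ n) 2 μ).HasOrthogonalProjection := by
    rw [iInf_lpMeas hℱ]
    infer_instance
  have hanti : Antitone fun n ↦ lpMeas ℝ ℝ (ℱ n) 2 μ := fun i j hij g hg ↦ by
    rw [mem_lpMeas_iff_aestronglyMeasurable] at hg ⊢
    exact hg.mono (hℱ hij)
  have hlim := tendsto_starProjection_iInf _ hanti f
  simp only [iInf_lpMeas hℱ] at hlim
  exact hlim

theorem tendsto_Lp_of_tendsto_Lp_of_exponent_le {E ι : Type*} [NormedAddCommGroup E]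
    [IsFiniteMeasure μ] {p q : ℝ≥0∞} [Fact (1 ≤ p)] [Fact (1 ≤ q)] (hpq : p ≤ q) {l : Filter ι}
    {F : ι → Lp E p μ} {F₀ : Lp E p μ} {G : ι → Lp E q μ} {G₀ : Lp E q μ}
    (hFG : ∀ i, F i =ᵐ[μ] G i) (hFG₀ : F₀ =ᵐ[μ] G₀) (hG : Tendsto G l (𝓝 G₀)) :
    Tendsto F l (𝓝 F₀) := by
  rw [Lp.tendsto_Lp_iff_tendsto_eLpNorm'] at hG ⊢
  let C := μ univ ^ (1 / p.toReal - 1 / q.toReal)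
  have hr : 0 ≤ 1 / p.toReal - 1 / q.toReal := by
    rcases eq_or_ne q ∞ with rfl | hq
    · simp
    · have hp_pos : 0 < p.toReal :=
        ENNReal.toReal_pos (zero_lt_one.trans_le Fact.out).ne' (ne_top_of_le_ne_top hq hpq)
      exact sub_nonneg.2 (one_div_le_one_div_of_le hp_pos (ENNReal.toReal_mono hq hpq))
  have hC : C ≠ ∞ := ENNReal.rpow_ne_top_of_nonneg hr (measure_ne_top μ univ)
  have hbound (i : ι) : eLpNorm (⇑(F i) - ⇑F₀) p μ ≤ eLpNorm (⇑(G i) - ⇑G₀) q μ * C := by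
    rw [eLpNorm_congr_ae ((hFG i).sub hFG₀)]
    exact eLpNorm_le_eLpNorm_mul_rpow_measure_univ hpq
      ((Lp.aestronglyMeasurable _).sub (Lp.aestronglyMeasurable _))
  have hlim : Tendsto (fun i ↦ eLpNorm (⇑(G i) - ⇑G₀) q μ * C) l (𝓝 0) := by
    simpa using ENNReal.Tendsto.mul_const hG (.inr hC)
  exact tendsto_of_tendsto_of_tendsto_of_le_of_le tendsto_const_nhds hlim
    (fun _ ↦ zero_le) hbound

variable {E : Type*} [NormedAddCommGroup E] [NormedSpace ℝ E]

theorem tendsto_condExpInd_iInf [IsFiniteMeasure μ] (hℱ : Antitone ℱ) (hle : ∀ n, ℱ n ≤ m)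
    {s : Set Ω} (hs : MeasurableSet s) (c : E) :
    Tendsto (fun n ↦ condExpInd E (hle n) μ s c) atTop
      (𝓝 (condExpInd E (iInf_le_of_le 0 (hle 0)) μ s c)) := by
  have hμs := measure_ne_top μ s
  have hlim : Tendsto (fun n ↦ condExpIndSMul (hle n) hs hμs c) atTop
      (𝓝 (condExpIndSMul (iInf_le_of_le 0 (hle 0)) hs hμs c)) :=
    (ContinuousLinearMap.continuous _).tendsto _ |>.comp (tendsto_condExpL2_iInf hℱ hle _)
  exact tendsto_Lp_of_tendsto_Lp_of_exponent_le one_le_two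
    (fun n ↦ condExpInd_ae_eq_condExpIndSMul (hle n) hs hμs c)
    (condExpInd_ae_eq_condExpIndSMul _ hs hμs c) hlim

variable [CompleteSpace E]

theorem lipschitzWith_condExpL1CLM {m' : MeasurableSpace Ω} (hm : m' ≤ m)
    [SigmaFinite (μ.trim hm)] : LipschitzWith 1 (condExpL1CLM E hm μ) :=
  ContinuousLinearMap.lipschitzWith_of_opNorm_le (L1.norm_setToL1_le _ zero_le_one)

theorem tendsto_condExpL1CLM_iInf [IsFiniteMeasure μ] (hℱ : Antitone ℱ) (hle : ∀ n, ℱ n ≤ m)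
    (f : Lp E 1 μ) :
    Tendsto (fun n ↦ condExpL1CLM E (hle n) μ f) atTop
      (𝓝 (condExpL1CLM E (iInf_le_of_le 0 (hle 0)) μ f)) := by
  induction f using Lp.induction ENNReal.one_ne_top with
  | indicatorConst c hs hμs =>
    simpa only [condExpL1CLM_indicatorConst] using tendsto_condExpInd_iInf hℱ hle hs c
  | add hf hg _ hf_lim hg_lim => simpa only [map_add] using hf_lim.add hg_lim
  | isClosed =>
    have hequi : Equicontinuous fun n ↦ (condExpL1CLM E (hle n) μ : Lp E 1 μ → Lp E 1 μ) :=
      (LipschitzWith.uniformEquicontinuous _ 1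
        fun n ↦ lipschitzWith_condExpL1CLM (hle n)).equicontinuous
    exact hequi.isClosed_setOfPred_tendsto (ContinuousLinearMap.continuous _)

end DownwardTheorem

section InvariantFunctions

theorem comp_ae_eq_self_of_forall_preimage_ae_eq {Ω β : Type*} [TopologicalSpace β]
    [T2Space β] {m : MeasurableSpace Ω} {μ : Measure Ω} {φ : Ω → Ω} {m' : MeasurableSpace Ω}
    (hinv : ∀ B, MeasurableSet[m'] B → φ ⁻¹' B =ᵐ[μ] B) {f : Ω → β}
    (hf : StronglyMeasurable[m'] f) : f ∘ φ =ᵐ[μ] f := by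
  have happrox (n : ℕ) : ∀ᵐ x ∂μ, hf.approx n (φ x) = hf.approx n x := by
    have hfiber : ∀ᵐ x ∂μ, ∀ y ∈ range (hf.approx n),
        φ x ∈ hf.approx n ⁻¹' {y} ↔ x ∈ hf.approx n ⁻¹' {y} :=
      (ae_ball_iff (hf.approx n).finite_range.countable).2 fun y _ ↦
        (hinv _ ((hf.approx n).measurableSet_fiber y)).mem_iff
    filter_upwards [hfiber] with x hx using (hx _ (mem_range_self x)).2 rfl
  filter_upwards [ae_all_iff.2 happrox] with x hx
  refine tendsto_nhds_unique (hf.tendsto_approx (φ x)) ?_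
  simpa only [hx] using hf.tendsto_approx x

variable {Ω : Type*} {m' m : MeasurableSpace Ω} {μ : Measure Ω} {φ : Ω → Ω}
  {E : Type*} [NormedAddCommGroup E] {p : ℝ≥0∞}

theorem compMeasurePreserving_eq_self_of_forall_preimage_ae_eq (hφ : MeasurePreserving φ μ μ)
    (hinv : ∀ B, MeasurableSet[m'] B → φ ⁻¹' B =ᵐ[μ] B) {f : Lp E p μ}
    (hf : AEStronglyMeasurable[m'] f μ) : Lp.compMeasurePreserving φ hφ f = f := by
  obtain ⟨g, hg, hfg⟩ := hf
  refine Lp.ext ?_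
  calc Lp.compMeasurePreserving φ hφ f =ᵐ[μ] f ∘ φ := Lp.coeFn_compMeasurePreserving f hφ
    _ =ᵐ[μ] g ∘ φ := hφ.quasiMeasurePreserving.ae_eq_comp hfg
    _ =ᵐ[μ] g := comp_ae_eq_self_of_forall_preimage_ae_eq hinv hg
    _ =ᵐ[μ] f := hfg.symm

theorem isometry_iterate_compMeasurePreserving [Fact (1 ≤ p)] (hφ : MeasurePreserving φ μ μ)
    (n : ℕ) : Isometry (Lp.compMeasurePreserving (E := E) (p := p) φ hφ)^[n] := by
  rw [Lp.compMeasurePreserving_iterate]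
  exact Lp.isometry_compMeasurePreserving (hφ.iterate n)

theorem preimage_ae_eq_of_compMeasurePreserving_indicatorConstLp (hφ : MeasurePreserving φ μ μ)
    {s : Set Ω} (hs : MeasurableSet s) (hμs : μ s ≠ ∞) {c : E} (hc : c ≠ 0)
    (h : Lp.compMeasurePreserving φ hφ (indicatorConstLp p hs hμs c) =
      indicatorConstLp p hs hμs c) :
    φ ⁻¹' s =ᵐ[μ] s := by
  rw [Lp.indicatorConstLp_compMeasurePreserving] at h
  exact (indicatorConstLp_inj _ _ _ _ hc).1 h

end InvariantFunctions

section Tail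

variable {Ω : Type*} [m : MeasurableSpace Ω] {μ : Measure Ω} {φ : Ω → Ω} {B : Set Ω}

/-- The tail σ-algebra `Σ_∞ = ⋂ₙ φ⁻ⁿ(Σ)` of a transformation. -/
abbrev tailMeasurableSpace (φ : Ω → Ω) : MeasurableSpace Ω :=
  ⨅ n : ℕ, m.comap φ^[n]

/-- Condition (iii): every set of the tail σ-algebra is `φ`-invariant up to a null set. -/
def HasInvariantTail (φ : Ω → Ω) (μ : Measure Ω) : Prop :=
  ∀ B, MeasurableSet[tailMeasurableSpace φ] B → φ ⁻¹' B =ᵐ[μ] B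

theorem measurableSet_tailMeasurableSpace :
    MeasurableSet[tailMeasurableSpace φ] B ↔
      ∀ n : ℕ, ∃ A, MeasurableSet A ∧ B = φ^[n] ⁻¹' A := by
  simp only [MeasurableSpace.measurableSet_iInf,
    MeasurableSpace.measurableSet_comap, eq_comm]

theorem hasInvariantTail_iff :
    HasInvariantTail φ μ ↔
      ∀ B, (∀ n : ℕ, ∃ A, MeasurableSet A ∧ B = φ^[n] ⁻¹' A) → μ (B ∆ (φ ⁻¹' B)) = 0 := by
  simp only [HasInvariantTail, measurableSet_tailMeasurableSpace, measure_symmDiff_eq_zero_iff]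
  exact forall₂_congr fun _ _ ↦ eventuallyEq_comm

theorem antitone_comap_iterate (hφ : Measurable φ) : Antitone fun n : ℕ ↦ m.comap φ^[n] :=
  antitone_nat_of_succ_le fun n ↦ by
    rw [Function.iterate_succ', ← MeasurableSpace.comap_comp]
    exact MeasurableSpace.comap_mono hφ.comap_le

theorem tailMeasurableSpace_le_comap_iterate (n : ℕ) : tailMeasurableSpace φ ≤ m.comap φ^[n] :=
  iInf_le _ n

theorem tailMeasurableSpace_le (φ : Ω → Ω) : tailMeasurableSpace φ ≤ m := by
  simpa using tailMeasurableSpace_le_comap_iterate (φ := φ) 0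

end Tail

section PerronFrobenius

variable {Ω : Type*} {m : MeasurableSpace Ω} {μ : Measure Ω} {φ : Ω → Ω}
  {E : Type*} [NormedAddCommGroup E] [NormedSpace ℝ E]
  {P : Lp E 1 μ →L[ℝ] Lp E 1 μ}

/-- `P` is the Perron–Frobenius operator of `φ` on (vector-valued) `L¹`. -/
def IsPerronFrobenius (φ : Ω → Ω) (P : Lp E 1 μ →L[ℝ] Lp E 1 μ) : Prop :=
  ∀ (f : Lp E 1 μ) (A : Set Ω), MeasurableSet A → ∫ x in A, P f x ∂μ = ∫ x in φ ⁻¹' A, f x ∂μ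

namespace IsPerronFrobenius

theorem pow (hP : IsPerronFrobenius φ P) (hφ : Measurable φ) (n : ℕ) :
    IsPerronFrobenius φ^[n] (P ^ n) := by
  induction n with
  | zero => exact fun f A _ ↦ rfl
  | succ n ih =>
    intro f A hA
    rw [pow_succ, mul_apply_eq_comp, ih _ A hA, hP f _ (hφ.iterate n hA), ← preimage_comp,
      ← Function.iterate_succ]

variable [CompleteSpace E]

theorem compMeasurePreserving_apply (hP : IsPerronFrobenius φ P) (hφ : MeasurePreserving φ μ μ)
    [SigmaFinite (μ.trim hφ.measurable.comap_le)] (f : Lp E 1 μ) :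
    Lp.compMeasurePreserving φ hφ (P f) = condExpL1CLM E hφ.measurable.comap_le μ f := by
  have hcomp := Lp.coeFn_compMeasurePreserving (P f) hφ
  refine Lp.ext (ae_eq_of_forall_setIntegral_eq_of_sigmaFinite' hφ.measurable.comap_le
    (fun _ _ _ ↦ (L1.integrable_coeFn _).integrableOn)
    (fun _ _ _ ↦ (L1.integrable_coeFn _).integrableOn) ?_ ?_
    (aestronglyMeasurable_condExpL1CLM f))
  · rintro _ ⟨A, hA, rfl⟩ -
    have hA' : MeasurableSet[m.comap φ] (φ ⁻¹' A) := ⟨A, hA, rfl⟩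
    calc ∫ x in φ ⁻¹' A, Lp.compMeasurePreserving φ hφ (P f) x ∂μ
        = ∫ x in φ ⁻¹' A, P f (φ x) ∂μ := integral_congr_ae (ae_restrict_of_ae hcomp)
      _ = ∫ x in A, P f x ∂(μ.map φ) := (setIntegral_map hA
          (by simpa only [hφ.map_eq] using Lp.aestronglyMeasurable (P f)) hφ.aemeasurable).symm
      _ = ∫ x in φ ⁻¹' A, f x ∂μ := by rw [hφ.map_eq, hP f A hA]
      _ = ∫ x in φ ⁻¹' A, condExpL1CLM E hφ.measurable.comap_le μ f x ∂μ :=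
          (setIntegral_condExpL1CLM f hA').symm
  · exact ((Lp.stronglyMeasurable (P f)).comp_measurable
      (comap_measurable φ)).aestronglyMeasurable.congr hcomp.symm

variable [IsFiniteMeasure μ]

theorem iterate_compMeasurePreserving_pow (hP : IsPerronFrobenius φ P)
    (hφ : MeasurePreserving φ μ μ) (n : ℕ) (f : Lp E 1 μ) :
    (Lp.compMeasurePreserving φ hφ)^[n] ((P ^ n) f) =
      condExpL1CLM E (hφ.iterate n).measurable.comap_le μ f := by
  rw [Lp.compMeasurePreserving_iterate]
  exact (hP.pow hφ.measurable n).compMeasurePreserving_apply (hφ.iterate n) f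

theorem tendsto_pow_of_hasInvariantTail (hP : IsPerronFrobenius φ P)
    (hφ : MeasurePreserving φ μ μ) (htail : HasInvariantTail φ μ) (f : Lp E 1 μ) :
    Tendsto (fun n ↦ (P ^ n) f) atTop (𝓝 (condExpL1CLM E (tailMeasurableSpace_le φ) μ f)) := by
  set g := condExpL1CLM E (tailMeasurableSpace_le φ) μ f
  have hfixed : Lp.compMeasurePreserving φ hφ g = g :=
    compMeasurePreserving_eq_self_of_forall_preimage_ae_eq hφ htail
      (aestronglyMeasurable_condExpL1CLM f)
  have hdist (n : ℕ) : dist ((P ^ n) f) g =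
      dist (condExpL1CLM E (hφ.iterate n).measurable.comap_le μ f) g := by
    rw [← (isometry_iterate_compMeasurePreserving hφ n).dist_eq,
      hP.iterate_compMeasurePreserving_pow hφ, Function.iterate_fixed hfixed]
  rw [tendsto_iff_dist_tendsto_zero]
  simp only [hdist]
  exact tendsto_iff_dist_tendsto_zero.1 (tendsto_condExpL1CLM_iInf
    (antitone_comap_iterate hφ.measurable) (fun n ↦ (hφ.iterate n).measurable.comap_le) f)

theorem compMeasurePreserving_eq_self_of_tendsto_pow (hP : IsPerronFrobenius φ P)
    (hφ : MeasurePreserving φ μ μ) {f g : Lp E 1 μ}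
    (hf : AEStronglyMeasurable[tailMeasurableSpace φ] f μ)
    (hlim : Tendsto (fun n ↦ (P ^ n) f) atTop (𝓝 g)) : Lp.compMeasurePreserving φ hφ f = f := by
  set U := Lp.compMeasurePreserving (E := E) (p := 1) φ hφ
  have hUP (n : ℕ) : U^[n] ((P ^ n) f) = f := by
    rw [hP.iterate_compMeasurePreserving_pow hφ]
    exact condExpL1CLM_of_aestronglyMeasurable' f (hf.mono (tailMeasurableSpace_le_comap_iterate n))
  have hdist (n : ℕ) : dist ((P ^ n) f) ((P ^ (n + 1)) f) = dist (U f) f := by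
    rw [← (isometry_iterate_compMeasurePreserving hφ (n + 1)).dist_eq, hUP (n + 1),
      Function.iterate_succ_apply', hUP n]
  have hzero := hlim.dist (hlim.comp (tendsto_add_atTop_nat 1))
  simp only [Function.comp_apply, hdist, dist_self] at hzero
  exact dist_eq_zero.1 (tendsto_nhds_unique tendsto_const_nhds hzero)

theorem forall_exists_tendsto_pow_iff_hasInvariantTail [Nontrivial E]
    (hP : IsPerronFrobenius φ P) (hφ : MeasurePreserving φ μ μ) :
    (∀ f, ∃ g, Tendsto (fun n ↦ (P ^ n) f) atTop (𝓝 g)) ↔ HasInvariantTail φ μ := by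
  refine ⟨fun hconv B hB ↦ ?_, fun htail f ↦ ⟨_, hP.tendsto_pow_of_hasInvariantTail hφ htail f⟩⟩
  obtain ⟨c, hc⟩ := exists_ne (0 : E)
  have hBm := tailMeasurableSpace_le φ _ hB
  obtain ⟨g, hg⟩ := hconv (indicatorConstLp 1 hBm (measure_ne_top μ B) c)
  have hind : AEStronglyMeasurable[tailMeasurableSpace φ]
      (indicatorConstLp 1 hBm (measure_ne_top μ B) c) μ :=
    ⟨_, stronglyMeasurable_const.indicator hB, indicatorConstLp_coeFn⟩
  exact preimage_ae_eq_of_compMeasurePreserving_indicatorConstLp hφ hBm _ hc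
    (hP.compMeasurePreserving_eq_self_of_tendsto_pow hφ hind hg)

end IsPerronFrobenius

end PerronFrobenius

section Images

variable {Ω : Type*} {m : MeasurableSpace Ω} {μ : Measure Ω} {φ : Ω → Ω} {A B : Set Ω}

theorem measurableSet_image_iterate
    (hbi : ∀ A : Set Ω, MeasurableSet A → MeasurableSet (φ '' A)) (hA : MeasurableSet A) (n : ℕ) :
    MeasurableSet (φ^[n] '' A) := by
  induction n with
  | zero => simpa using hA
  | succ n ih =>
    rw [Function.iterate_succ', image_comp]
    exact hbi _ ih

theorem monotone_preimage_image_iterate (φ : Ω → Ω) (A : Set Ω) :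
    Monotone fun n : ℕ ↦ φ^[n] ⁻¹' (φ^[n] '' A) :=
  monotone_nat_of_le_succ fun n ↦ by
    rw [Function.iterate_succ', image_comp, preimage_comp]
    exact preimage_mono (subset_preimage_image φ _)

/-- The set of points whose forward orbit eventually coincides, at equal times, with the orbit of a
point of `A`. It is the limit set `L` in condition (i). -/
def tailSaturation (φ : Ω → Ω) (A : Set Ω) : Set Ω :=
  ⋃ n : ℕ, φ^[n] ⁻¹' (φ^[n] '' A)

theorem tailSaturation_eq_preimage_iterate (φ : Ω → Ω) (A : Set Ω) (k : ℕ) :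
    tailSaturation φ A = φ^[k] ⁻¹' ⋃ n : ℕ, φ^[n] ⁻¹' (φ^[n + k] '' A) := by
  rw [tailSaturation, ← (monotone_preimage_image_iterate φ A).iUnion_nat_add k, preimage_iUnion]
  simp only [← preimage_comp, ← Function.iterate_add]

theorem measurableSet_tailSaturation (hφ : Measurable φ)
    (hbi : ∀ A : Set Ω, MeasurableSet A → MeasurableSet (φ '' A)) (hA : MeasurableSet A) :
    MeasurableSet[tailMeasurableSpace φ] (tailSaturation φ A) :=
  measurableSet_tailMeasurableSpace.2 fun k ↦
    ⟨_, .iUnion fun n ↦ hφ.iterate n (measurableSet_image_iterate hbi hA (n + k)),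
      tailSaturation_eq_preimage_iterate φ A k⟩

theorem tendsto_measure_image_iterate_symmDiff_tailSaturation [IsFiniteMeasure μ]
    (hφ : MeasurePreserving φ μ μ)
    (hbi : ∀ A : Set Ω, MeasurableSet A → MeasurableSet (φ '' A)) (htail : HasInvariantTail φ μ)
    (hA : MeasurableSet A) :
    Tendsto (fun n : ℕ ↦ μ ((φ^[n] '' A) ∆ tailSaturation φ A)) atTop (𝓝 0) := by
  let D (n : ℕ) : Set Ω := φ^[n] ⁻¹' (φ^[n] '' A)
  let L := tailSaturation φ A
  have himage := measurableSet_image_iterate hbi hA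
  have hD (n : ℕ) : MeasurableSet (D n) := (hφ.iterate n).measurable (himage n)
  have htailL := measurableSet_tailSaturation hφ.measurable hbi hA
  have hL : MeasurableSet L := tailMeasurableSpace_le φ _ htailL
  have hDL (n : ℕ) : D n ⊆ L := subset_iUnion D n
  have hinv (n : ℕ) : φ^[n] ⁻¹' L =ᵐ[μ] L :=
    hφ.quasiMeasurePreserving.preimage_iterate_ae_eq n (htail L htailL)
  have hmeasure (n : ℕ) : μ ((φ^[n] '' A) ∆ L) = μ (L \ D n) := by
    rw [← (hφ.iterate n).measure_preimage ((himage n).symmDiff hL).nullMeasurableSet,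
      preimage_symmDiff, measure_congr (EventuallyEq.rfl.symmDiff (hinv n)),
      symmDiff_of_le (hDL n)]
  have hempty : ⋂ n, L \ D n = ∅ := by
    rw [← sdiff_iUnion]
    exact Set.sdiff_self
  have hlim := tendsto_measure_iInter_atTop (μ := μ) (s := fun n ↦ L \ D n)
    (fun n ↦ (hL.diff (hD n)).nullMeasurableSet)
    (fun i j hij ↦ sdiff_subset_sdiff_right (monotone_preimage_image_iterate φ A hij))
    ⟨0, measure_ne_top μ _⟩
  rw [hempty, measure_empty] at hlim
  exact hlim.congr fun n ↦ (hmeasure n).symm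

theorem preimage_image_iterate_of_measurableSet_tail
    (hB : MeasurableSet[tailMeasurableSpace φ] B) (n : ℕ) : φ^[n] ⁻¹' (φ^[n] '' B) = B := by
  obtain ⟨A, -, rfl⟩ := measurableSet_tailMeasurableSpace.1 hB n
  exact preimage_image_preimage

theorem measure_image_iterate_symmDiff_succ (hφ : MeasurePreserving φ μ μ)
    (hbi : ∀ A : Set Ω, MeasurableSet A → MeasurableSet (φ '' A))
    (hB : MeasurableSet[tailMeasurableSpace φ] B) (n : ℕ) :
    μ ((φ^[n + 1] '' B) ∆ (φ^[n] '' B)) = μ (B ∆ (φ ⁻¹' B)) := by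
  have himage := measurableSet_image_iterate hbi (tailMeasurableSpace_le φ _ hB)
  rw [← (hφ.iterate (n + 1)).measure_preimage
      ((himage (n + 1)).symmDiff (himage n)).nullMeasurableSet, preimage_symmDiff,
    preimage_image_iterate_of_measurableSet_tail hB, Function.iterate_succ, preimage_comp,
    preimage_image_iterate_of_measurableSet_tail hB]

theorem preimage_ae_eq_of_tendsto_measure_image_iterate_symmDiff (hφ : MeasurePreserving φ μ μ)
    (hbi : ∀ A : Set Ω, MeasurableSet A → MeasurableSet (φ '' A))
    (hB : MeasurableSet[tailMeasurableSpace φ] B) {L : Set Ω}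
    (hlim : Tendsto (fun n : ℕ ↦ μ ((φ^[n] '' B) ∆ L)) atTop (𝓝 0)) : φ ⁻¹' B =ᵐ[μ] B := by
  have hbound (n : ℕ) :
      μ (B ∆ (φ ⁻¹' B)) ≤ μ ((φ^[n + 1] '' B) ∆ L) + μ ((φ^[n] '' B) ∆ L) := by
    rw [← measure_image_iterate_symmDiff_succ hφ hbi hB n, symmDiff_comm (φ^[n] '' B) L]
    exact measure_symmDiff_le _ _ _
  have hzero := (hlim.comp (tendsto_add_atTop_nat 1)).add hlim
  rw [add_zero] at hzero
  exact (measure_symmDiff_eq_zero_iff.1 (nonpos_iff_eq_zero.1 (ge_of_tendsto' hzero hbound))).symm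

theorem forall_exists_tendsto_image_iterate_iff_hasInvariantTail [IsFiniteMeasure μ]
    (hφ : MeasurePreserving φ μ μ)
    (hbi : ∀ A : Set Ω, MeasurableSet A → MeasurableSet (φ '' A)) :
    (∀ A, MeasurableSet A → ∃ L, MeasurableSet L ∧
      Tendsto (fun n : ℕ ↦ μ ((φ^[n] '' A) ∆ L)) atTop (𝓝 0)) ↔ HasInvariantTail φ μ := by
  refine ⟨fun himage B hB ↦ ?_, fun htail A hA ↦ ⟨tailSaturation φ A, ?_, ?_⟩⟩
  · obtain ⟨L, -, hlim⟩ := himage B (tailMeasurableSpace_le φ _ hB)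
    exact preimage_ae_eq_of_tendsto_measure_image_iterate_symmDiff hφ hbi hB hlim
  · exact tailMeasurableSpace_le φ _ (measurableSet_tailSaturation hφ.measurable hbi hA)
  · exact tendsto_measure_image_iterate_symmDiff_tailSaturation hφ hbi htail hA

end Images

theorem stmt0_general {Ω E : Type*} [MeasurableSpace Ω] [NormedAddCommGroup E]
    [NormedSpace ℝ E] [CompleteSpace E] [Nontrivial E] (μ : Measure Ω) [IsFiniteMeasure μ]
    (φ : Ω → Ω) (hmp : MeasurePreserving φ μ μ)
    (hbi : ∀ A : Set Ω, MeasurableSet A → MeasurableSet (φ '' A))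
    (P : Lp E 1 μ →L[ℝ] Lp E 1 μ)
    (hP : ∀ (f : Lp E 1 μ) (A : Set Ω), MeasurableSet A →
      ∫ x in A, (P f) x ∂μ = ∫ x in φ ⁻¹' A, f x ∂μ) :
    ((∀ A : Set Ω, MeasurableSet A → ∃ L : Set Ω, MeasurableSet L ∧
        Tendsto (fun n : ℕ => μ ((φ^[n] '' A) ∆ L)) atTop (𝓝 0)) ↔
      (∀ f : Lp E 1 μ, ∃ g : Lp E 1 μ, Tendsto (fun n : ℕ => (P ^ n) f) atTop (𝓝 g)))
    ∧ ((∀ f : Lp E 1 μ, ∃ g : Lp E 1 μ, Tendsto (fun n : ℕ => (P ^ n) f) atTop (𝓝 g)) ↔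
      (∀ B : Set Ω, (∀ n : ℕ, ∃ A : Set Ω, MeasurableSet A ∧ B = φ^[n] ⁻¹' A) →
        μ (B ∆ (φ ⁻¹' B)) = 0)) := by
  have himage := forall_exists_tendsto_image_iterate_iff_hasInvariantTail hmp hbi
  have hpow := IsPerronFrobenius.forall_exists_tendsto_pow_iff_hasInvariantTail hP hmp
  exact ⟨himage.trans hpow.symm, hpow.trans hasInvariantTail_iff⟩

theorem stmt0 {Ω : Type*} [m : MeasurableSpace Ω] (μ : Measure Ω) [IsProbabilityMeasure μ]
    (φ : Ω → Ω) (hmp : MeasurePreserving φ μ μ)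
    (hbi : ∀ A : Set Ω, MeasurableSet A → MeasurableSet (φ '' A))
    (P : Lp ℝ 1 μ →L[ℝ] Lp ℝ 1 μ)
    (hP : ∀ (f : Lp ℝ 1 μ) (A : Set Ω), MeasurableSet A →
      ∫ x in A, (P f) x ∂μ = ∫ x in φ ⁻¹' A, f x ∂μ) :
    ((∀ A : Set Ω, MeasurableSet A → ∃ L : Set Ω, MeasurableSet L ∧
        Tendsto (fun n : ℕ => μ ((φ^[n] '' A) ∆ L)) atTop (𝓝 0)) ↔
      (∀ f : Lp ℝ 1 μ, ∃ g : Lp ℝ 1 μ, Tendsto (fun n : ℕ => (P ^ n) f) atTop (𝓝 g)))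
    ∧ ((∀ f : Lp ℝ 1 μ, ∃ g : Lp ℝ 1 μ, Tendsto (fun n : ℕ => (P ^ n) f) atTop (𝓝 g)) ↔
      (∀ B : Set Ω, (∀ n : ℕ, ∃ A : Set Ω, MeasurableSet A ∧ B = φ^[n] ⁻¹' A) →
        μ (B ∆ (φ ⁻¹' B)) = 0)) :=
  stmt0_general μ φ hmp hbi P hP
end

section
/- Let (Ω,Σ,μ) be a probability space and φ : Ω → Ω a bimeasurable measure-preserving transformation. If for every A ∈ Σ there exists a measurable set L with μ(φⁿ(A) Δ L) → 0 as n → ∞, then every B ∈ Σ_∞ satisfies μ(B Δ φ⁻¹(B)) = 0 (i.e., Σ_∞ is contained in the completion of Σ_inv within Σ). -/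
open MeasureTheory Filter Set Topology
open scoped symmDiff ENNReal

/-!
A set `B` of `Σ_∞` is the preimage of `φⁿ(B)` under `φⁿ` for every `n`, so pulling
`φⁿ⁺¹(B) ∆ φⁿ(B)` back along `φⁿ⁺¹` gives exactly `B ∆ φ⁻¹(B)`. The measure of this fixed set is
therefore at most that of `φⁿ⁺¹(B) ∆ φⁿ(B)`, which tends to zero since `φⁿ(B)` converges.
-/

theorem tendsto_measure_symmDiff_of_common_limit {α ι : Type*} [MeasurableSpace α] {μ : Measure α}
    {l : Filter ι} {s t : ι → Set α} {u : Set α}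
    (hs : Tendsto (fun i => μ (s i ∆ u)) l (𝓝 0)) (ht : Tendsto (fun i => μ (t i ∆ u)) l (𝓝 0)) :
    Tendsto (fun i => μ (s i ∆ t i)) l (𝓝 0) := by
  have hsum : Tendsto (fun i => μ (s i ∆ u) + μ (t i ∆ u)) l (𝓝 0) := by
    simpa only [add_zero] using hs.add ht
  refine tendsto_of_tendsto_of_tendsto_of_le_of_le tendsto_const_nhds hsum
    (fun _ => zero_le) fun i => ?_
  rw [symmDiff_comm (t i) u]
  exact measure_symmDiff_le (s i) u (t i)

section

variable {Ω : Type*} [MeasurableSpace Ω] {μ : Measure Ω} {φ : Ω → Ω}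

theorem measure_symmDiff_preimage_le (hφ : MeasurePreserving φ μ μ) {n : ℕ} {A A' B : Set Ω}
    (hA : φ^[n] ⁻¹' A = B) (hA' : φ^[n + 1] ⁻¹' A' = B) :
    μ (B ∆ (φ ⁻¹' B)) ≤ μ (A' ∆ A) := by
  have hpullback : φ^[n + 1] ⁻¹' (A' ∆ A) = B ∆ (φ ⁻¹' B) := by
    rw [preimage_symmDiff, hA', Function.iterate_succ, preimage_comp, hA]
  rw [← hpullback]
  exact (hφ.iterate (n + 1)).measure_preimage_le (A' ∆ A)

theorem stmt3_general (hφ : MeasurePreserving φ μ μ) {B L : Set Ω}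
    (hB : ∀ n : ℕ, ∃ A : Set Ω, B = φ^[n] ⁻¹' A)
    (hL : Tendsto (fun n : ℕ => μ ((φ^[n] '' B) ∆ L)) atTop (𝓝 0)) :
    μ (B ∆ (φ ⁻¹' B)) = 0 := by
  have hsaturated (n : ℕ) : φ^[n] ⁻¹' (φ^[n] '' B) = B := by
    obtain ⟨A, hA⟩ := hB n
    rw [hA, preimage_image_preimage]
  have hsucc : Tendsto (fun n => μ ((φ^[n + 1] '' B) ∆ (φ^[n] '' B))) atTop (𝓝 0) :=
    tendsto_measure_symmDiff_of_common_limit ((tendsto_add_atTop_iff_nat 1).2 hL) hL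
  exact nonpos_iff_eq_zero.1 <| ge_of_tendsto' hsucc fun n =>
    measure_symmDiff_preimage_le hφ (hsaturated n) (hsaturated (n + 1))

end

theorem stmt3 {Ω : Type*} [m : MeasurableSpace Ω] (μ : Measure Ω) [IsProbabilityMeasure μ]
    (φ : Ω → Ω) (hmp : MeasurePreserving φ μ μ)
    (hbi : ∀ A : Set Ω, MeasurableSet A → MeasurableSet (φ '' A))
    (hconv : ∀ A : Set Ω, MeasurableSet A → ∃ L : Set Ω, MeasurableSet L ∧
      Tendsto (fun n : ℕ => μ ((φ^[n] '' A) ∆ L)) atTop (𝓝 0))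
    (B : Set Ω) (hB : ∀ n : ℕ, ∃ A : Set Ω, MeasurableSet A ∧ B = φ^[n] ⁻¹' A) :
    μ (B ∆ (φ ⁻¹' B)) = 0 := by
  obtain ⟨A, hA, rfl⟩ := hB 0
  obtain ⟨L, -, hL⟩ := hconv A hA
  exact stmt3_general hmp (fun n => (hB n).imp fun _ h => h.2) hL
end

section
/- Let (Ω,Σ,μ) be a probability space and φ : Ω → Ω a measure-preserving measurable transformation. Suppose that for every B ∈ Σ there exists D ∈ Σ with μ(D) > 0 such that lim_{n→∞} sup_{A∈Σ, A⊆D} | μ(φ⁻ⁿ(A) ∩ B) − μ(A)μ(B) | = 0. Then the system is ergodic: every set Ω₁ ∈ Σ with μ(φ⁻¹(Ω₁) Δ Ω₁) = 0 satisfies μ(Ω₁) ∈ {0,1}. -/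
open MeasureTheory Filter Set Topology
open scoped symmDiff ENNReal

/-!
If `B` is invariant, then `φ⁻ⁿ(A) ∩ B = φ⁻ⁿ(A ∩ B)` has measure `μ(A ∩ B)` for every `n`, so mixing
of `A` against `B` says that `A` and `B` are independent. Let this hold for all `A ⊆ D`. Taking
`A = D ∩ B` gives `μ(D ∩ B) = μ(D ∩ B) μ(B)`, and `A = D \ B` gives `0 = μ(D \ B) μ(B)`; since
`D` is not null, `μ(B)` is `1` or `0`. Every almost invariant set agrees almost everywhere with an
invariant one.
-/

theorem tendsto_of_tendsto_iSup_dist {ι κ X : Type*} [PseudoMetricSpace X] {l : Filter ι}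
    {F : ι → κ → X} {f : κ → X} (hbdd : ∀ i, BddAbove (range fun k => dist (F i k) (f k)))
    (h : Tendsto (fun i => ⨆ k, dist (F i k) (f k)) l (𝓝 0)) (k : κ) :
    Tendsto (fun i => F i k) l (𝓝 (f k)) :=
  tendsto_iff_dist_tendsto_zero.mpr <|
    squeeze_zero (fun _ => dist_nonneg) (fun i => le_ciSup (hbdd i) k) h

section MeasureSpace

variable {Ω : Type*} [MeasurableSpace Ω] {μ : Measure Ω} {φ : Ω → Ω} {A B D : Set Ω}

theorem bddAbove_range_dist_measureReal_mul [IsFiniteMeasure μ] {κ : Type*}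
    (s t : κ → Set Ω) (B : Set Ω) :
    BddAbove (range fun k => dist (μ.real (s k)) (μ.real (t k) * μ.real B)) := by
  refine ⟨max (μ.real univ) (μ.real univ * μ.real B), forall_mem_range.mpr fun k => ?_⟩
  have hs : μ.real (s k) ≤ μ.real univ := measureReal_mono (subset_univ _)
  have ht : μ.real (t k) * μ.real B ≤ μ.real univ * μ.real B :=
    mul_le_mul_of_nonneg_right (measureReal_mono (subset_univ _)) measureReal_nonneg
  exact abs_sub_le_of_nonneg_of_le measureReal_nonneg (le_max_of_le_left hs) (by positivity)
    (le_max_of_le_right ht)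

theorem tendsto_measure_of_tendsto_iSup_abs_sub [IsFiniteMeasure μ] {ι κ : Type*}
    {l : Filter ι} {s : ι → κ → Set Ω} {t : κ → Set Ω}
    (h : Tendsto (fun i => ⨆ k, |μ.real (s i k) - μ.real (t k) * μ.real B|) l (𝓝 0)) (k : κ) :
    Tendsto (fun i => μ (s i k)) l (𝓝 (μ (t k) * μ B)) := by
  have hreal : Tendsto (fun i => μ.real (s i k)) l (𝓝 (μ.real (t k) * μ.real B)) :=
    tendsto_of_tendsto_iSup_dist (F := fun i k => μ.real (s i k))
      (fun i => bddAbove_range_dist_measureReal_mul (s i) t B) h k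
  refine (ENNReal.tendsto_toReal_iff (fun _ => measure_ne_top _ _) (by finiteness)).mp ?_
  rwa [ENNReal.toReal_mul]

theorem measure_preimage_iterate_inter_of_preimage_eq (hφ : MeasurePreserving φ μ μ)
    (hAB : NullMeasurableSet (A ∩ B) μ) (hB : φ ⁻¹' B = B) (n : ℕ) :
    μ (φ^[n] ⁻¹' A ∩ B) = μ (A ∩ B) := by
  have hBn : φ^[n] ⁻¹' B = B := Function.IsFixedPt.preimage_iterate hB n
  calc μ (φ^[n] ⁻¹' A ∩ B)
      = μ (φ^[n] ⁻¹' (A ∩ B)) := by rw [preimage_inter, hBn]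
    _ = μ (A ∩ B) := (hφ.iterate n).measure_preimage hAB

theorem measure_eq_zero_or_one_of_forall_subset_measure_inter_eq_mul
    (hD : MeasurableSet D) (hD₀ : μ D ≠ 0) (hD_top : μ D ≠ ∞) (hB : MeasurableSet B)
    (h : ∀ A ⊆ D, MeasurableSet A → μ (A ∩ B) = μ A * μ B) : μ B = 0 ∨ μ B = 1 := by
  have hinter : μ (D ∩ B) = μ (D ∩ B) * μ B := by
    simpa only [inter_assoc, inter_self] using h (D ∩ B) inter_subset_left (hD.inter hB)
  have hdiff : μ (D \ B) * μ B = 0 := by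
    simpa only [sdiff_inter_self, measure_empty] using (h (D \ B) sdiff_subset (hD.diff hB)).symm
  by_cases hDB : μ (D ∩ B) = 0
  · have hD_diff : μ (D \ B) ≠ 0 := by rwa [measure_sdiff_null' hDB]
    exact .inl ((mul_eq_zero.mp hdiff).resolve_left hD_diff)
  · have hDB_top : μ (D ∩ B) ≠ ∞ := measure_ne_top_of_subset inter_subset_left hD_top
    exact .inr ((ENNReal.mul_eq_left hDB hDB_top).mp hinter.symm)

theorem eventuallyConst_ae_iff_measure_eq_zero_or_one [IsProbabilityMeasure μ]
    (hB : NullMeasurableSet B μ) : EventuallyConst B (ae μ) ↔ μ B = 0 ∨ μ B = 1 := by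
  rw [eventuallyConst_set', ae_eq_empty, ae_eq_univ_iff_measure_eq hB, measure_univ]

theorem stmt6_general [IsProbabilityMeasure μ] {l : Filter ℕ} [l.NeBot]
    (hφ : MeasurePreserving φ μ μ)
    (hmix : ∀ B, MeasurableSet B → ∃ D, MeasurableSet D ∧ 0 < μ D ∧ ∀ A ⊆ D, MeasurableSet A →
      Tendsto (fun n => μ (φ^[n] ⁻¹' A ∩ B)) l (𝓝 (μ A * μ B))) :
    Ergodic φ μ := by
  refine ⟨hφ, ⟨fun B hB hinv => ?_⟩⟩
  obtain ⟨D, hD, hD_pos, hlim⟩ := hmix B hB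
  have hindep : ∀ A ⊆ D, MeasurableSet A → μ (A ∩ B) = μ A * μ B := fun A hAD hA => by
    have hconst := measure_preimage_iterate_inter_of_preimage_eq hφ (hA.inter hB).nullMeasurableSet
      hinv
    exact tendsto_nhds_unique tendsto_const_nhds (by simpa only [hconst] using hlim A hAD hA)
  rw [eventuallyConst_ae_iff_measure_eq_zero_or_one hB.nullMeasurableSet]
  exact measure_eq_zero_or_one_of_forall_subset_measure_inter_eq_mul hD hD_pos.ne'
    (measure_ne_top μ D) hB hindep

theorem measure_eq_zero_or_one_of_measure_preimage_symmDiff_eq_zero [IsProbabilityMeasure μ]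
    (hφ : QuasiErgodic φ μ) (hB : NullMeasurableSet B μ) (hinv : μ ((φ ⁻¹' B) ∆ B) = 0) :
    μ B = 0 ∨ μ B = 1 :=
  (eventuallyConst_ae_iff_measure_eq_zero_or_one hB).mp <|
    hφ.aeconst_set₀ hB (measure_symmDiff_eq_zero_iff.mp hinv)

end MeasureSpace

theorem stmt6 {Ω : Type*} [m : MeasurableSpace Ω] (μ : Measure Ω) [IsProbabilityMeasure μ]
    (φ : Ω → Ω) (hmp : MeasurePreserving φ μ μ)
    (hmix : ∀ B : Set Ω, MeasurableSet B → ∃ D : Set Ω, MeasurableSet D ∧ 0 < μ D ∧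
      Tendsto (fun n : ℕ => ⨆ A : {A : Set Ω // MeasurableSet A ∧ A ⊆ D},
        |(μ (φ^[n] ⁻¹' (A : Set Ω) ∩ B)).toReal - (μ (A : Set Ω)).toReal * (μ B).toReal|)
        atTop (𝓝 0)) :
    ∀ Ω₁ : Set Ω, MeasurableSet Ω₁ → μ ((φ ⁻¹' Ω₁) ∆ Ω₁) = 0 → μ Ω₁ = 0 ∨ μ Ω₁ = 1 := by
  have hergodic : Ergodic φ μ := stmt6_general hmp fun B hB =>
    (hmix B hB).imp fun _ ⟨hD, hD_pos, hlim⟩ => ⟨hD, hD_pos, fun A hAD hA =>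
      tendsto_measure_of_tendsto_iSup_abs_sub hlim ⟨A, hA, hAD⟩⟩
  exact fun _ hΩ₁ => measure_eq_zero_or_one_of_measure_preimage_symmDiff_eq_zero
    hergodic.quasiErgodic hΩ₁.nullMeasurableSet
end

section
/- Let X be a real Banach space and P : X → X a bounded linear operator with ‖P‖ ≤ 1, and let T = P* be its adjoint acting on the dual space X*. Let F = ⋂_{n∈ℕ} Tⁿ(B_{X*}), where B_{X*} is the closed unit ball of X*. Then for f ∈ X the following are equivalent: (i) ‖Pⁿ f‖ → 0 as n → ∞; (ii) h(f) = 0 for every h ∈ F. -/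
open Filter Set Topology

/-!
For a contraction `P` the norms `‖Pⁿ x‖` decrease to a seminorm `p x`. By Hahn–Banach, a functional
`h` factors as `g ∘ Pⁿ` with `‖g‖ ≤ 1` exactly when `‖h x‖ ≤ ‖Pⁿ x‖` for all `x`; hence `F` is the
set of functionals dominated by `p`. Hahn–Banach once more provides `h ∈ F` with `h f = p f`, so
that `F` annihilates `f` exactly when `p f = 0`.
-/

section HahnBanach

variable {𝕜 E F : Type*} [RCLike 𝕜]

theorem exists_dual_comp_eq_of_le_seminorm [AddCommGroup E] [Module 𝕜 E] [AddCommGroup F]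
    [Module 𝕜 F] (A : E →ₗ[𝕜] F) (p : Seminorm 𝕜 F) (h : Module.Dual 𝕜 E)
    (hp : ∀ x, ‖h x‖ ≤ p (A x)) :
    ∃ g : Module.Dual 𝕜 F, g ∘ₗ A = h ∧ ∀ y, ‖g y‖ ≤ p y := by
  have vanishes_on_ker : h ∈ (LinearMap.ker A).dualAnnihilator := by
    refine (Submodule.mem_dualAnnihilator h).2 fun x hx => norm_le_zero_iff.1 ?_
    simpa [LinearMap.mem_ker.1 hx] using hp x
  rw [← LinearMap.range_dualMap_eq_dualAnnihilator_ker] at vanishes_on_ker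
  obtain ⟨g₀, rfl⟩ := vanishes_on_ker
  obtain ⟨g, hg_eq, hg_le⟩ := Module.Dual.exists_extension_of_le_seminorm
    (LinearMap.range A) (g₀.domRestrict (LinearMap.range A)) (p := p) (by
      rintro ⟨_, x, rfl⟩
      exact hp x)
  exact ⟨g, LinearMap.ext fun x => hg_eq ⟨A x, x, rfl⟩, hg_le⟩

theorem exists_dual_eq_seminorm [AddCommGroup E] [Module 𝕜 E] (p : Seminorm 𝕜 E) (x : E) :
    ∃ h : Module.Dual 𝕜 E, h x = p x ∧ ∀ y, ‖h y‖ ≤ p y := by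
  obtain ⟨h, h_comp, h_le⟩ := exists_dual_comp_eq_of_le_seminorm
    (LinearMap.toSpanSingleton 𝕜 E x) p (LinearMap.toSpanSingleton 𝕜 𝕜 (p x : 𝕜)) fun c => by
      simp [map_smul_eq_mul, abs_of_nonneg (apply_nonneg p x)]
  exact ⟨h, by simpa using LinearMap.congr_fun h_comp 1, h_le⟩

theorem image_comp_unitBall_eq [SeminormedAddCommGroup E] [NormedSpace 𝕜 E]
    [SeminormedAddCommGroup F] [NormedSpace 𝕜 F] (A : E →L[𝕜] F) :
    (fun g : F →L[𝕜] 𝕜 => g.comp A) '' {g | ‖g‖ ≤ 1} =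
      {h : E →L[𝕜] 𝕜 | ∀ x, ‖h x‖ ≤ ‖A x‖} := by
  ext h
  constructor
  · rintro ⟨g, hg, rfl⟩ x
    simpa using g.le_of_opNorm_le hg (A x)
  · intro h_le
    obtain ⟨g, hg_comp, hg_le⟩ :=
      exists_dual_comp_eq_of_le_seminorm A.toLinearMap (normSeminorm 𝕜 F) h.toLinearMap h_le
    refine ⟨g.mkContinuous 1 fun y => by simpa using hg_le y, ?_, ?_⟩
    · exact g.mkContinuous_norm_le zero_le_one _
    · ext x
      exact LinearMap.congr_fun hg_comp x

end HahnBanach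

theorem iterate_comp_right_eq_comp_pow {𝕜 E F : Type*} [Semiring 𝕜] [TopologicalSpace E]
    [AddCommMonoid E] [Module 𝕜 E] [TopologicalSpace F] [AddCommMonoid F] [Module 𝕜 F]
    (P : E →L[𝕜] E) (n : ℕ) :
    (fun g : E →L[𝕜] F => g.comp P)^[n] = fun g => g.comp (P ^ n) := by
  induction n with
  | zero => rfl
  | succ n ih =>
    rw [Function.iterate_succ, ih, pow_succ']
    rfl

section Contraction

variable {𝕜 E : Type*} [NontriviallyNormedField 𝕜] [SeminormedAddCommGroup E] [NormedSpace 𝕜 E]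
  {P : E →L[𝕜] E}

theorem antitone_norm_pow_apply (hP : ‖P‖ ≤ 1) (x : E) : Antitone fun n : ℕ => ‖(P ^ n) x‖ := by
  refine antitone_nat_of_succ_le fun n => ?_
  simpa [pow_succ'] using P.le_of_opNorm_le hP ((P ^ n) x)

theorem bddBelow_range_norm_pow_apply (P : E →L[𝕜] E) (x : E) :
    BddBelow (range fun n : ℕ => ‖(P ^ n) x‖) :=
  ⟨0, by rintro _ ⟨n, rfl⟩; exact norm_nonneg _⟩

theorem tendsto_norm_pow_apply_iInf (hP : ‖P‖ ≤ 1) (x : E) :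
    Tendsto (fun n : ℕ => ‖(P ^ n) x‖) atTop (𝓝 (⨅ n : ℕ, ‖(P ^ n) x‖)) :=
  tendsto_atTop_ciInf (antitone_norm_pow_apply hP x) (bddBelow_range_norm_pow_apply P x)

/-- The asymptotic seminorm `x ↦ lim ‖Pⁿ x‖` of a contraction `P`, which dominates exactly the
functionals in `F`. It is encoded as an infimum, which equals the limit because the sequence
decreases. -/
noncomputable def asymptoticSeminorm (hP : ‖P‖ ≤ 1) : Seminorm 𝕜 E :=
  Seminorm.of (fun x => ⨅ n : ℕ, ‖(P ^ n) x‖)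
    (fun x y => le_of_tendsto_of_tendsto' (tendsto_norm_pow_apply_iInf hP (x + y))
      ((tendsto_norm_pow_apply_iInf hP x).add (tendsto_norm_pow_apply_iInf hP y))
      fun n => by simpa only [map_add] using norm_add_le ((P ^ n) x) ((P ^ n) y))
    (fun c x => by simp only [map_smul, norm_smul, Real.mul_iInf_of_nonneg (norm_nonneg c)])

variable (hP : ‖P‖ ≤ 1)

theorem tendsto_norm_pow_apply_asymptoticSeminorm (x : E) :
    Tendsto (fun n : ℕ => ‖(P ^ n) x‖) atTop (𝓝 (asymptoticSeminorm hP x)) :=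
  tendsto_norm_pow_apply_iInf hP x

theorem le_asymptoticSeminorm_iff {x : E} {c : ℝ} :
    c ≤ asymptoticSeminorm hP x ↔ ∀ n : ℕ, c ≤ ‖(P ^ n) x‖ :=
  le_ciInf_iff (bddBelow_range_norm_pow_apply P x)

theorem asymptoticSeminorm_le_norm (x : E) : asymptoticSeminorm hP x ≤ ‖x‖ := by
  simpa using (le_asymptoticSeminorm_iff hP).1 le_rfl 0

end Contraction

section DualIntersection

variable {𝕜 X : Type*} [RCLike 𝕜] [SeminormedAddCommGroup X] [NormedSpace 𝕜 X]
  {P : X →L[𝕜] X} (hP : ‖P‖ ≤ 1)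

theorem iInter_iterate_image_unitBall_eq :
    ⋂ n : ℕ, (fun g : X →L[𝕜] 𝕜 => g.comp P)^[n] '' {g | ‖g‖ ≤ 1} =
      {h | ∀ x, ‖h x‖ ≤ asymptoticSeminorm hP x} := by
  ext h
  simp only [iterate_comp_right_eq_comp_pow, image_comp_unitBall_eq, mem_iInter, mem_ofPred_eq,
    le_asymptoticSeminorm_iff]
  exact forall_comm

theorem exists_dual_eq_asymptoticSeminorm (f : X) :
    ∃ h : X →L[𝕜] 𝕜, h f = asymptoticSeminorm hP f ∧
      ∀ x, ‖h x‖ ≤ asymptoticSeminorm hP x := by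
  obtain ⟨h, h_eq, h_le⟩ := exists_dual_eq_seminorm (asymptoticSeminorm hP) f
  refine ⟨h.mkContinuous 1 fun x => ?_, h_eq, h_le⟩
  simpa using (h_le x).trans (asymptoticSeminorm_le_norm hP x)

end DualIntersection

theorem stmt12_general {𝕜 X : Type*} [RCLike 𝕜] [SeminormedAddCommGroup X] [NormedSpace 𝕜 X]
    (P : X →L[𝕜] X) (hP : ‖P‖ ≤ 1)
    (T : (X →L[𝕜] 𝕜) → (X →L[𝕜] 𝕜)) (hT : ∀ h : X →L[𝕜] 𝕜, T h = h.comp P)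
    (f : X) :
    Tendsto (fun n : ℕ => ‖(P ^ n) f‖) atTop (𝓝 0) ↔
      ∀ h ∈ ⋂ n : ℕ, T^[n] '' {g : X →L[𝕜] 𝕜 | ‖g‖ ≤ 1}, h f = 0 := by
  obtain rfl : T = fun h => h.comp P := funext hT
  rw [iInter_iterate_image_unitBall_eq hP]
  have lim := tendsto_norm_pow_apply_asymptoticSeminorm hP f
  constructor
  · intro lim_zero h h_le
    exact norm_le_zero_iff.1 ((h_le f).trans_eq (tendsto_nhds_unique lim lim_zero))
  · intro annihilates
    obtain ⟨h, h_eq, h_le⟩ := exists_dual_eq_asymptoticSeminorm hP f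
    have seminorm_zero : asymptoticSeminorm hP f = 0 := by
      exact_mod_cast h_eq.symm.trans (annihilates h h_le)
    rwa [seminorm_zero] at lim

theorem stmt12 {X : Type*} [NormedAddCommGroup X] [NormedSpace ℝ X] [CompleteSpace X]
    (P : X →L[ℝ] X) (hP : ‖P‖ ≤ 1)
    (T : (X →L[ℝ] ℝ) → (X →L[ℝ] ℝ)) (hT : ∀ h : X →L[ℝ] ℝ, T h = h.comp P)
    (f : X) :
    Tendsto (fun n : ℕ => ‖(P ^ n) f‖) atTop (𝓝 0) ↔
      ∀ h ∈ ⋂ n : ℕ, T^[n] '' {g : X →L[ℝ] ℝ | ‖g‖ ≤ 1}, h f = 0 :=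
  stmt12_general P hP T hT f
end
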